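/- Let M ⊆ ℝ^n × ℝ^n × ℝ^m × ℝ^m (elements written (f_x, e_x, y, u), with flows (f_x, y) and efforts (e_x, u)) be a monotone relation, and let H(x) = ½ xᵀQx + aᵀx + c with Q = Qᵀ positive semidefinite. Let (x_i, u_i, y_i), i = 1,2, be two trajectories on an interval I, with x_i differentiable and (−ẋ_i(t), ∇H(x_i(t)), y_i(t), u_i(t)) ∈ M for all t ∈ I. Then d/dt [ ½ (x₁(t) − x₂(t))ᵀ Q (x₁(t) − x₂(t)) ] ≤ ⟨u₁(t) − u₂(t), y₁(t) − y₂(t)⟩ for all t ∈ I; that is, an incrementally port-Hamiltonian system with quadratic-affine Hamiltonian is incrementally passive with incremental storage function V(x₁,x₂) = ½ (x₁ − x₂)ᵀQ(x₁ − x₂). -/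

import Mathlib

/-- The duality pairing (standard inner product) on `ℝ^n`. -/
noncomputable def dot {n : ℕ} (e f : Fin n → ℝ) : ℝ := ∑ i, e i * f i

/-- Monotone relation with elements `(f_x, e_x, y, u)`, flows `(f_x, y)` and
efforts `(e_x, u)`. -/
def MonoPH {n m : ℕ}
    (M : Set ((Fin n → ℝ) × (Fin n → ℝ) × (Fin m → ℝ) × (Fin m → ℝ))) : Prop :=
  ∀ fx ex y u fx' ex' y' u',
    (fx, ex, y, u) ∈ M → (fx', ex', y', u') ∈ M →
    0 ≤ dot (ex - ex') (fx - fx') + dot (u - u') (y - y')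

/-- An incrementally port-Hamiltonian system with quadratic-affine
Hamiltonian `H(x) = ½ xᵀQx + aᵀx + c` (so `∇H(x) = Qx + a`), `Q ⪰ 0`, is
incrementally passive with incremental storage function
`V(x₁,x₂) = ½ (x₁−x₂)ᵀQ(x₁−x₂)`: along any two trajectories,
`d/dt V(x₁(t),x₂(t)) ≤ ⟨u₁(t) − u₂(t), y₁(t) − y₂(t)⟩`. -/
theorem incrementallyPH_quadratic_incrementallyPassive {n m : ℕ}
    (M : Set ((Fin n → ℝ) × (Fin n → ℝ) × (Fin m → ℝ) × (Fin m → ℝ)))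
    (hM : MonoPH M)
    (Q : Matrix (Fin n) (Fin n) ℝ) (hQsym : Q.transpose = Q) (hQ : Q.PosSemidef)
    (a : Fin n → ℝ) (c : ℝ)
    (I : Set ℝ)
    (x1 x2 x1' x2' : ℝ → Fin n → ℝ) (u1 u2 y1 y2 : ℝ → Fin m → ℝ)
    (hx1 : ∀ t ∈ I, HasDerivAt x1 (x1' t) t)
    (hx2 : ∀ t ∈ I, HasDerivAt x2 (x2' t) t)
    (h1 : ∀ t ∈ I, (-(x1' t), Q.mulVec (x1 t) + a, y1 t, u1 t) ∈ M)
    (h2 : ∀ t ∈ I, (-(x2' t), Q.mulVec (x2 t) + a, y2 t, u2 t) ∈ M) :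
    ∀ t ∈ I,
      HasDerivAt
        (fun τ => (1 / 2) * dot (x1 τ - x2 τ) (Q.mulVec (x1 τ - x2 τ)))
        (dot (Q.mulVec (x1 t - x2 t)) (x1' t - x2' t)) t ∧
      dot (Q.mulVec (x1 t - x2 t)) (x1' t - x2' t) ≤
        dot (u1 t - u2 t) (y1 t - y2 t) := by
  intro t ht
  have hd : HasDerivAt (fun τ => x1 τ - x2 τ) (x1' t - x2' t) t := (hx1 t ht).sub (hx2 t ht)
  have hdi := hasDerivAt_pi.1 hd
  have hsymm : ∀ v w : Fin n → ℝ, dot v (Q.mulVec w) = dot (Q.mulVec v) w := by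
    intro v w
    change v ⬝ᵥ Q.mulVec w = Q.mulVec v ⬝ᵥ w
    rw [Matrix.dotProduct_mulVec, ← Matrix.mulVec_transpose, hQsym]
  have hcomm : ∀ v w : Fin n → ℝ, dot v w = dot w v := fun v w => dotProduct_comm v w
  constructor
  · have hQd : ∀ i, HasDerivAt (fun τ => Q.mulVec (x1 τ - x2 τ) i)
        (Q.mulVec (x1' t - x2' t) i) t := by
      intro i
      change HasDerivAt (fun τ => ∑ j, Q i j * (x1 τ - x2 τ) j) (∑ j, Q i j * (x1' t - x2' t) j) t
      exact HasDerivAt.fun_sum (fun j _ => (hdi j).const_mul (Q i j))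
    have hs : HasDerivAt (fun τ => dot (x1 τ - x2 τ) (Q.mulVec (x1 τ - x2 τ)))
        (∑ i, ((x1' t - x2' t) i * Q.mulVec (x1 t - x2 t) i
          + (x1 t - x2 t) i * Q.mulVec (x1' t - x2' t) i)) t :=
      HasDerivAt.fun_sum (fun i _ => (hdi i).mul (hQd i))
    have hs2 := hs.const_mul (1 / 2 : ℝ)
    refine hs2.congr_deriv (Eq.symm ?_)
    rw [Finset.sum_add_distrib]
    change _ = 1 / 2 * (dot (x1' t - x2' t) (Q.mulVec (x1 t - x2 t))
      + dot (x1 t - x2 t) (Q.mulVec (x1' t - x2' t)))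
    rw [hsymm (x1 t - x2 t), hcomm (x1' t - x2' t)]
    ring
  · have h := hM _ _ _ _ _ _ _ _ (h1 t ht) (h2 t ht)
    have e1 : Q.mulVec (x1 t) + a - (Q.mulVec (x2 t) + a) = Q.mulVec (x1 t - x2 t) := by
      rw [Matrix.mulVec_sub]; abel
    have e2 : -(x1' t) - -(x2' t) = -(x1' t - x2' t) := by abel
    have e3 : ∀ v w : Fin n → ℝ, dot v (-w) = - dot v w := fun v w => dotProduct_neg v w
    rw [e1, e2, e3] at h
    linarith
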